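/- arXiv:math/0505034 — 3 statements merged into one kernel-verified Lean document; each statement's English description precedes it below -/
import Mathlib

section
/- Let Q be a set of questions, A a set of answers, 𝒫 a set of positions (functions from Q to A), and let i, j ∈ Q with i ≠ j be questions receiving the same answer in every element of 𝒫, i.e. ∀ P ∈ 𝒫, P(i) = P(j). Let 𝒫' be the set of restrictions of elements of 𝒫 to Q \ {j}. Then 𝒫 satisfies condition (G) if and only if 𝒫' satisfies condition (G) (with Q \ {j} as the set of questions); thus the pair of questions may be replaced by their conjunction without loss of generality with respect to globalism. -/
/-!
Whether a function is constant depends only on its range, and omitting `j` from the domain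
leaves the range unchanged, since the value at `j` is still taken at `i`.
-/

theorem subsingleton_range_iff_forall_eq {ι : Sort*} {α : Type*} {f : ι → α} :
    (Set.range f).Subsingleton ↔ ∀ x y, f x = f y := by
  simp only [Set.Subsingleton, Set.forall_mem_range]

theorem range_restrict_ne_eq_range {α β : Type*} {f : α → β} {j : α} (h : f j ∈ f '' {j}ᶜ) :
    (Set.range fun x : {x // x ≠ j} => f x) = Set.range f :=
  calc
    (Set.range fun x : {x // x ≠ j} => f x) = f '' {j}ᶜ := (Set.image_eq_range f {j}ᶜ).symm
    _ = insert (f j) (f '' {j}ᶜ) := (Set.insert_eq_of_mem h).symm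
    _ = Set.range f := Set.insert_image_compl_eq_range f j

/-- If two distinct questions i and j receive the same answer in every element
of Ps, and Ps' is the set of restrictions of elements of Ps to Q \ {j}, then
Ps satisfies (G) iff Ps' satisfies (G): the pair of questions may be replaced
by their conjunction without loss of generality w.r.t. globalism. -/
theorem stmt_14 (Q A : Type*) (Ps : Set (Q → A)) (i j : Q) (hij : i ≠ j)
    (h : ∀ P ∈ Ps, P i = P j) :
    ((∀ P ∈ Ps, ∀ y z : Q, P y = P z) ↔
      (∀ P' ∈ (fun (P : Q → A) (q : {q : Q // q ≠ j}) => P q.val) '' Ps,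
        ∀ y z : {q : Q // q ≠ j}, P' y = P' z)) := by
  rw [Set.forall_mem_image]
  refine forall₂_congr fun P hP => ?_
  have answer_at_j_mem : P j ∈ P '' {j}ᶜ := ⟨i, hij, h P hP⟩
  rw [← subsingleton_range_iff_forall_eq, ← subsingleton_range_iff_forall_eq,
    range_restrict_ne_eq_range answer_at_j_mem]
end

section
/- Let Q be a set of questions with at least two elements and A a set of answers with at least two elements. Then there exists a set 𝒫 of positions (functions from Q to A) that simultaneously fails condition (G), fails condition (M), satisfies condition (G′), and satisfies condition (M′); that is, some situations exhibit both hybrid localism and hybrid pluralism. -/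
/-!
Fix the answer `a` to a single question `y` and admit every position `P` with `P y = a`. These
positions agree at `y`, and the position answering `a` everywhere is among them; but the answer to
any other question is left completely free, which defeats both globalism and monism.
-/

section Positions

variable {Q A : Type*}

/-- Globalism (G), for a set of positions: each position answers all questions alike. -/
def IsGlobalist (Ps : Set (Q → A)) : Prop :=
  ∀ P ∈ Ps, ∀ y z : Q, P y = P z

/-- Monism (M), for a set of positions: all positions give the same answer to each question. -/
def IsMonist (Ps : Set (Q → A)) : Prop :=
  ∀ y : Q, ∀ P ∈ Ps, ∀ P' ∈ Ps, P y = P' y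

/-- Weak globalism (G′), for a set of positions: some position answers all questions alike. -/
def IsWeaklyGlobalist (Ps : Set (Q → A)) : Prop :=
  ∃ P ∈ Ps, ∀ y z : Q, P y = P z

/-- Weak monism (M′), for a set of positions: all positions agree on some question. -/
def IsWeaklyMonist (Ps : Set (Q → A)) : Prop :=
  ∃ y : Q, ∀ P ∈ Ps, ∀ P' ∈ Ps, P y = P' y

theorem exists_apply_eq_and_apply_eq {y z : Q} (hzy : z ≠ y) (a b : A) :
    ∃ P : Q → A, P y = a ∧ P z = b := by
  classical
  exact ⟨Function.update (Function.const Q a) z b,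
    Function.update_of_ne hzy.symm _ _, Function.update_self _ _ _⟩

theorem not_isGlobalist_setOf_apply_eq [Nontrivial Q] [Nontrivial A] (y : Q) (a : A) :
    ¬ IsGlobalist {P : Q → A | P y = a} := by
  intro hG
  obtain ⟨z, hzy⟩ := exists_ne y
  obtain ⟨b, hba⟩ := exists_ne a
  obtain ⟨P, hPy, hPz⟩ := exists_apply_eq_and_apply_eq hzy a b
  exact hba <| calc
    b = P z := hPz.symm
    _ = P y := hG P hPy z y
    _ = a := hPy

theorem not_isMonist_setOf_apply_eq [Nontrivial Q] [Nontrivial A] (y : Q) (a : A) :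
    ¬ IsMonist {P : Q → A | P y = a} := by
  intro hM
  obtain ⟨z, hzy⟩ := exists_ne y
  obtain ⟨b, hba⟩ := exists_ne a
  obtain ⟨P, hPy, hPz⟩ := exists_apply_eq_and_apply_eq hzy a b
  exact hba <| calc
    b = P z := hPz.symm
    _ = Function.const Q a z := hM z P hPy (Function.const Q a) rfl
    _ = a := rfl

theorem isWeaklyGlobalist_of_const_mem {Ps : Set (Q → A)} {a : A}
    (ha : Function.const Q a ∈ Ps) : IsWeaklyGlobalist Ps :=
  ⟨Function.const Q a, ha, fun _ _ => rfl⟩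

theorem isWeaklyMonist_setOf_apply_eq (y : Q) (a : A) :
    IsWeaklyMonist {P : Q → A | P y = a} :=
  ⟨y, fun _ hP _ hP' => hP.trans hP'.symm⟩

end Positions

/-- If Q and A each have at least two elements, then there is a set Ps of
positions failing (G), failing (M), satisfying (G′) and satisfying (M′):
some situations exhibit both hybrid localism and hybrid pluralism. -/
theorem stmt_17 (Q A : Type*) [Nontrivial Q] [Nontrivial A] :
    ∃ Ps : Set (Q → A),
      ¬ (∀ P ∈ Ps, ∀ y z : Q, P y = P z) ∧
      ¬ (∀ y : Q, ∀ P ∈ Ps, ∀ P' ∈ Ps, P y = P' y) ∧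
      (∃ P ∈ Ps, ∀ y z : Q, P y = P z) ∧
      (∃ y : Q, ∀ P ∈ Ps, ∀ P' ∈ Ps, P y = P' y) := by
  obtain ⟨y⟩ : Nonempty Q := inferInstance
  obtain ⟨a⟩ : Nonempty A := inferInstance
  have const_mem : Function.const Q a ∈ {P : Q → A | P y = a} := rfl
  exact ⟨{P | P y = a}, not_isGlobalist_setOf_apply_eq y a, not_isMonist_setOf_apply_eq y a,
    isWeaklyGlobalist_of_const_mem const_mem, isWeaklyMonist_setOf_apply_eq y a⟩
end

section
/- Let Q be a set of questions with at least two elements and A a set of answers with at least two elements. Then there exists a set 𝒫 of positions (functions from Q to A) that fails condition (G), fails condition (M), fails condition (G′), and fails condition (M′); that is, strict local pluralism is realizable. -/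
/-!
The set of all nonconstant positions is strictly locally pluralist. It violates (G′) by
construction. It violates (M′) because composing a nonconstant position `P` with a permutation of
the answers that moves `P y` yields another nonconstant position, with a different answer to `y`.
As there are a nonconstant position and a question, (G) would imply (G′) and (M) would imply (M′).
-/

section NonconstantFunctions

variable {Q A B : Type*}

variable (Q A) in
/-- The functions from `Q` to `A` taking at least two values, that is, the positions that do not
give the same answer to all questions. They witness strict local pluralism. -/
def nonconstantFunctions : Set (Q → A) :=
  {P | ∃ y z, P y ≠ P z}

theorem nonconstantFunctions_nonempty [Nontrivial Q] [Nontrivial A] :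
    (nonconstantFunctions Q A).Nonempty := by
  classical
  obtain ⟨y, z, hyz⟩ := exists_pair_ne Q
  obtain ⟨a, b, hab⟩ := exists_pair_ne A
  exact ⟨Function.update (fun _ ↦ b) y a, y, z, by simpa [hyz.symm] using hab⟩

theorem comp_mem_nonconstantFunctions {f : A → B} (hf : f.Injective) {P : Q → A}
    (hP : P ∈ nonconstantFunctions Q A) : f ∘ P ∈ nonconstantFunctions Q B :=
  let ⟨y, z, hyz⟩ := hP
  ⟨y, z, hf.ne hyz⟩

theorem exists_perm_apply_ne [Nontrivial A] (a : A) : ∃ σ : Equiv.Perm A, σ a ≠ a := by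
  classical
  obtain ⟨b, hba⟩ := exists_ne a
  exact ⟨Equiv.swap a b, by rwa [Equiv.swap_apply_left]⟩

theorem exists_mem_nonconstantFunctions_apply_ne [Nontrivial A] {P : Q → A}
    (hP : P ∈ nonconstantFunctions Q A) (y : Q) :
    ∃ P' ∈ nonconstantFunctions Q A, P' y ≠ P y :=
  let ⟨σ, hσ⟩ := exists_perm_apply_ne (P y)
  ⟨σ ∘ P, comp_mem_nonconstantFunctions σ.injective hP, hσ⟩

end NonconstantFunctions

/-- If Q and A each have at least two elements, then there is a set Ps of
positions failing (G), (M), (G′) and (M′): strict local pluralism is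
realizable. -/
theorem stmt_18 (Q A : Type*) [Nontrivial Q] [Nontrivial A] :
    ∃ Ps : Set (Q → A),
      ¬ (∀ P ∈ Ps, ∀ y z : Q, P y = P z) ∧
      ¬ (∀ y : Q, ∀ P ∈ Ps, ∀ P' ∈ Ps, P y = P' y) ∧
      ¬ (∃ P ∈ Ps, ∀ y z : Q, P y = P z) ∧
      ¬ (∃ y : Q, ∀ P ∈ Ps, ∀ P' ∈ Ps, P y = P' y) := by
  obtain ⟨P, hP⟩ := nonconstantFunctions_nonempty (Q := Q) (A := A)
  obtain ⟨y₀⟩ : Nonempty Q := inferInstance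
  have not_weak_globalism :
      ¬ ∃ P ∈ nonconstantFunctions Q A, ∀ y z : Q, P y = P z := by
    rintro ⟨P, ⟨y, z, hyz⟩, hconst⟩
    exact hyz (hconst y z)
  have not_weak_monism :
      ¬ ∃ y : Q, ∀ P ∈ nonconstantFunctions Q A, ∀ P' ∈ nonconstantFunctions Q A,
        P y = P' y := by
    rintro ⟨y, hagree⟩
    obtain ⟨P', hP', hne⟩ := exists_mem_nonconstantFunctions_apply_ne hP y
    exact hne (hagree P' hP' P hP)
  exact ⟨nonconstantFunctions Q A,
    fun globalism ↦ not_weak_globalism ⟨P, hP, globalism P hP⟩,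
    fun monism ↦ not_weak_monism ⟨y₀, monism y₀⟩,
    not_weak_globalism, not_weak_monism⟩
end
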